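/- Assume the quenched kernels Q_ω are strongly irreducible uniformly in ω: there exist ε > 0 and N ∈ ℕ such that for all x ∈ ℤ^d, all ω ∈ Ω and all e ∈ ℤ^d with ‖e‖₂ = 1, one has Q_ω^n(x,x+e) ≥ ε for some n ≤ N. Then there exists a constant C₁ > 0, not depending on ω, such that for all ω ∈ Ω, all n ≥ 1 and all x,y ∈ ℤ^d, Q_ω^n(x,y) ≤ C₁ M(T_y ω) n^{−d/2}. -/

import Mathlib

open scoped Classical

noncomputable section

/-- Points of `ℤ^d`. -/
abbrev Zd (d : ℕ) := Fin d → ℤ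

/-- Euclidean norm on `ℤ^d`. -/
def eucNorm {d : ℕ} (v : Zd d) : ℝ := Real.sqrt (∑ i, ((v i : ℝ)) ^ 2)

/-- `M(ω) = Σ_i Σ_x W_i(T_x ω) · 1{0 ∈ C_i + x}`, where the `i`-th cycle is
`C_i = (z i 0, …, z i (n i))`. -/
def Mfun {d K : ℕ} {Ω : Type*} (n : Fin K → ℕ) (z : Fin K → ℕ → Zd d)
    (T : Zd d → Ω → Ω) (W : Fin K → Ω → ℝ) (ω : Ω) : ℝ :=
  ∑ i : Fin K, ∑' x : Zd d, if ∃ j < n i, z i j + x = 0 then W i (T x ω) else 0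

/-- `p_v(ω) = M(ω)⁻¹ Σ_i Σ_x W_i(T_x ω) · 1{(0,v) ∈ C_i + x}`. -/
def pfun {d K : ℕ} {Ω : Type*} (n : Fin K → ℕ) (z : Fin K → ℕ → Zd d)
    (T : Zd d → Ω → Ω) (W : Fin K → Ω → ℝ) (ω : Ω) (v : Zd d) : ℝ :=
  (Mfun n z T W ω)⁻¹ *
    ∑ i : Fin K, ∑' x : Zd d,
      if ∃ j, 1 ≤ j ∧ j ≤ n i ∧ z i (j - 1) + x = 0 ∧ z i j + x = v then W i (T x ω) else 0

/-- `Λ`, the (finite) set of possible jumps. -/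
def Lam {d K : ℕ} (n : Fin K → ℕ) (z : Fin K → ℕ → Zd d) : Finset (Zd d) :=
  Finset.univ.biUnion fun i => (Finset.range (n i)).image fun j => z i (j + 1) - z i j

/-- The quenched transition kernel `Q_ω(x,y) = p_{y-x}(T_x ω)`. -/
def Qker {d K : ℕ} {Ω : Type*} (n : Fin K → ℕ) (z : Fin K → ℕ → Zd d)
    (T : Zd d → Ω → Ω) (W : Fin K → Ω → ℝ) (ω : Ω) (x y : Zd d) : ℝ :=
  pfun n z T W (T x ω) (y - x)

/-- `n`-fold composition of a transition kernel. -/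
def kerpow {d : ℕ} (Q : Zd d → Zd d → ℝ) : ℕ → Zd d → Zd d → ℝ
  | 0 => fun x y => if x = y then 1 else 0
  | m + 1 => fun x y => ∑' zz : Zd d, kerpow Q m x zz * Q zz y

/-
Nash's method for a non-reversible walk. The operator `P` of the walk preserves the measure with
weights `M(T_x ω)`, and its adjoint is the walk running through the cycles backwards, which
satisfies the same assumptions. Let `f = P ^ k δ_y`, and let `L` be a common multiple of the lengths
of the cycles, so that `P ^ L` is lazy. One step decreases `‖f‖²` by the mean variance of `f` under
the transition probabilities. Over a bounded number of steps this decrease therefore controls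
`P ^ r f (y) - P ^ (j + r) f (x)` whenever `y` can be reached from `x` in `j` steps, and after
summation over `L` consecutive times, with laziness used to realign the times, all the increments
of `g = ∑_{r < L} P ^ r f` along the axes. Nash's inequality for `g` then gives a recursion for
`‖P ^ k δ_y‖²` with solution `O(k ^ (-d / 2))`. Finally `M(T_x ω) Q^n(x, y)` is the inner product of
`P ^ (n - a) δ_y` and `P' ^ a δ_x`, where `P'` is the adjoint and `a ≈ n / 2`.
-/

section NashRecursion

lemma rpow_neg_le_rpow_mul_rpow_neg {s q m t : ℝ} (hs : 0 ≤ s) (hq : 0 < q) (hm : 0 < m)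
    (hmt : m ≤ q * t) : t ^ (-s) ≤ q ^ s * m ^ (-s) := calc
  t ^ (-s) ≤ (m / q) ^ (-s) :=
    Real.rpow_le_rpow_of_nonpos (by positivity) ((div_le_iff₀' hq).2 hmt) (neg_nonpos.2 hs)
  _ = q ^ s * m ^ (-s) := by
    rw [Real.div_rpow hm.le hq.le, Real.rpow_neg hq.le, div_inv_eq_mul, mul_comm]

lemma rpow_neg_mul_one_sub_le {s t : ℝ} (hs : 0 ≤ s) (ht : 0 < t) :
    t ^ (-s) * (1 - s / t) ≤ (t + 1) ^ (-s) := by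
  have hlog : Real.log (1 + 1 / t) ≤ 1 / t := by
    linarith [Real.log_le_sub_one_of_pos (show 0 < 1 + 1 / t by positivity)]
  have hbernoulli : 1 - s / t ≤ (1 + 1 / t) ^ (-s) := calc
    1 - s / t = 1 / t * -s + 1 := by ring
    _ ≤ Real.log (1 + 1 / t) * -s + 1 := by
      linarith [mul_le_mul_of_nonneg_right hlog hs]
    _ ≤ Real.exp (Real.log (1 + 1 / t) * -s) := Real.add_one_le_exp _
    _ = (1 + 1 / t) ^ (-s) := (Real.rpow_def_of_pos (by positivity) _).symm
  calc t ^ (-s) * (1 - s / t) ≤ t ^ (-s) * (1 + 1 / t) ^ (-s) := by gcongr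
    _ = (t + 1) ^ (-s) := by
      rw [← Real.mul_rpow ht.le (by positivity), mul_one_add, mul_one_div_cancel ht.ne']

lemma exists_nat_sq_le_le_four_mul_sq {q : ℝ} (hq : 1 ≤ q) :
    ∃ r : ℕ, 1 ≤ r ∧ (r : ℝ) ^ 2 ≤ q ∧ q ≤ 4 * (r : ℝ) ^ 2 := by
  have hr : 1 ≤ ⌊√q⌋₊ := Nat.le_floor (by simpa using hq)
  have hr' : (1 : ℝ) ≤ ⌊√q⌋₊ := by exact_mod_cast hr
  refine ⟨⌊√q⌋₊, hr, ?_, ?_⟩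
  · exact (Real.le_sqrt (Nat.cast_nonneg _) (by linarith)).1 (Nat.floor_le (Real.sqrt_nonneg q))
  · have hlt : √q ≤ 2 * ⌊√q⌋₊ := by linarith [Nat.lt_floor_add_one √q]
    calc q ≤ (2 * (⌊√q⌋₊ : ℝ)) ^ 2 := (Real.sqrt_le_left (by positivity)).1 hlt
      _ = 4 * (⌊√q⌋₊ : ℝ) ^ 2 := by ring

/-- The optimal scale in the Nash recursion at time `t` is `q ≍ t`; then the dissipation beats the
decrease of `t ^ (-s)`. -/
lemma le_rpow_of_nash_step {s a b A t q u u' : ℝ} (hs : 0 ≤ s) (ha : 1 ≤ a) (hb : 0 ≤ b)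
    (hq : 1 ≤ q) (hqt : a * (s + 1) * q ≤ t) (htq : t ≤ 4 * (a * (s + 1)) * q)
    (hA : 4 * (s + 1) * b * (4 * (a * (s + 1))) ^ s ≤ A) (hut : u ≤ A * t ^ (-s))
    (hrec : u ≤ a * q * (u - u') + b * q ^ (-s)) :
    u' ≤ A * (t + 1) ^ (-s) := by
  have hst : s + 1 ≤ t := by nlinarith [mul_nonneg (sub_nonneg.2 ha) (sub_nonneg.2 hq)]
  have ht : 0 < t := by linarith
  have hA0 : 0 ≤ A := le_trans (by positivity) hA
  have hdecrease : u' ≤ u * (1 - (a * q)⁻¹) + b * (a * q)⁻¹ * q ^ (-s) := by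
    have : (a * q)⁻¹ * u ≤ (u - u') + b * (a * q)⁻¹ * q ^ (-s) := by
      rw [inv_mul_le_iff₀ (by positivity)]
      refine hrec.trans_eq ?_
      field_simp
    linarith
  have hrate : (s + 1) / t ≤ (a * q)⁻¹ := by
    rw [← one_div, div_le_div_iff₀ ht (by positivity)]
    linarith
  have hrate' : (a * q)⁻¹ ≤ 4 * (s + 1) / t := by
    rw [← one_div, div_le_div_iff₀ (by positivity) ht]
    linarith
  have hscale : q ^ (-s) ≤ (4 * (a * (s + 1))) ^ s * t ^ (-s) :=
    rpow_neg_le_rpow_mul_rpow_neg hs (by positivity) ht htq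
  have hmain : u * (1 - (a * q)⁻¹) ≤ A * t ^ (-s) * (1 - (s + 1) / t) :=
    mul_le_mul hut (by linarith) (sub_nonneg.2 (inv_le_one_of_one_le₀ (by nlinarith)))
      (by positivity)
  have herror : b * (a * q)⁻¹ * q ^ (-s) ≤ A * t ^ (-s) / t := calc
    b * (a * q)⁻¹ * q ^ (-s)
        ≤ b * (4 * (s + 1) / t) * ((4 * (a * (s + 1))) ^ s * t ^ (-s)) := by gcongr
    _ = 4 * (s + 1) * b * (4 * (a * (s + 1))) ^ s * t ^ (-s) / t := by ring
    _ ≤ A * t ^ (-s) / t := by gcongr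
  calc u' ≤ A * t ^ (-s) * (1 - (s + 1) / t) + A * t ^ (-s) / t :=
        hdecrease.trans (add_le_add hmain herror)
    _ = A * (t ^ (-s) * (1 - s / t)) := by ring
    _ ≤ A * (t + 1) ^ (-s) := by gcongr; exact rpow_neg_mul_one_sub_le hs ht

lemma exists_le_rpow_of_nash_recursion {s a b u₀ : ℝ} (hs : 0 ≤ s) (ha : 1 ≤ a) (hb : 0 ≤ b)
    (hu₀ : 0 ≤ u₀) :
    ∃ A : ℝ, 0 < A ∧ ∀ u : ℕ → ℝ, (∀ k, u k ≤ u₀) →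
      (∀ k r : ℕ, 1 ≤ r →
        u k ≤ a * (r : ℝ) ^ 2 * (u k - u (k + 1)) + b * ((r : ℝ) ^ 2) ^ (-s)) →
      ∀ k : ℕ, u k ≤ A * ((k : ℝ) + 1) ^ (-s) := by
  set T := a * (s + 1)
  have hT0 : 0 < T := by positivity
  set B := 4 * (s + 1) * b * (4 * T) ^ s
  have hB0 : 0 ≤ B := by positivity
  refine ⟨u₀ * (T + 1) ^ s + B + 1, by positivity, fun u hu hrec k => ?_⟩
  have hearly : ∀ k : ℕ, (k : ℝ) ≤ T →
      u k ≤ (u₀ * (T + 1) ^ s + B + 1) * ((k : ℝ) + 1) ^ (-s) := fun k hk => by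
    rw [Real.rpow_neg (by positivity), ← div_eq_mul_inv, le_div_iff₀ (by positivity)]
    calc u k * ((k : ℝ) + 1) ^ s ≤ u₀ * (T + 1) ^ s := by gcongr; exact hu k
      _ ≤ u₀ * (T + 1) ^ s + B + 1 := by linarith
  induction k with
  | zero => exact hearly 0 (by simpa using hT0.le)
  | succ k ih =>
    rcases le_total ((k + 1 : ℕ) : ℝ) T with hk | hk
    · exact hearly _ hk
    push_cast at hk ⊢
    obtain ⟨r, hr, hrle, hler⟩ := exists_nat_sq_le_le_four_mul_sq ((one_le_div hT0).2 hk)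
    refine le_rpow_of_nash_step hs ha hb (one_le_pow₀ (by exact_mod_cast hr)) ?_ ?_ ?_ ih
      (hrec k r hr)
    · exact (le_div_iff₀' hT0).1 hrle
    · rw [div_le_iff₀ hT0] at hler
      linarith
    · have : 0 ≤ u₀ * (T + 1) ^ s := by positivity
      linarith

end NashRecursion

section NashInequality

lemma hasFiniteSupport_sq {V : Type*} {f : V → ℝ} (hf : f.HasFiniteSupport) :
    (fun x => f x ^ 2).HasFiniteSupport :=
  hf.fun_comp (g := (· ^ 2)) (zero_pow two_ne_zero)

/-- The squared `ℓ²` norm of the increment of `g` in direction `v`; summed over the generators of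
the group, this is the Dirichlet form of the simple random walk. -/
def sqIncrement {G : Type*} [AddCommGroup G] (g : G → ℝ) (v : G) : ℝ :=
  ∑' x, (g (x + v) - g x) ^ 2

variable {G : Type*} [AddCommGroup G] {g : G → ℝ}

lemma hasFiniteSupport_comp_add (hg : g.HasFiniteSupport) (v : G) :
    (fun x => g (x + v)).HasFiniteSupport :=
  hg.fun_comp_of_injective (add_left_injective v)

lemma tsum_comp_add (g : G → ℝ) (v : G) : ∑' x, g (x + v) = ∑' x, g x :=
  (Equiv.addRight v).tsum_eq g

lemma hasFiniteSupport_sq_increment (hg : g.HasFiniteSupport) (v : G) :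
    (fun x => (g (x + v) - g x) ^ 2).HasFiniteSupport :=
  hasFiniteSupport_sq ((hasFiniteSupport_comp_add hg v).fun_sub hg)

lemma sqIncrement_nonneg (g : G → ℝ) (v : G) : 0 ≤ sqIncrement g v :=
  tsum_nonneg fun _ => sq_nonneg _

@[simp]
lemma sqIncrement_zero (g : G → ℝ) : sqIncrement g 0 = 0 := by simp [sqIncrement]

@[simp]
lemma sqIncrement_neg (g : G → ℝ) (v : G) : sqIncrement g (-v) = sqIncrement g v := by
  rw [sqIncrement, ← tsum_comp_add _ v]
  exact tsum_congr fun x => by rw [add_neg_cancel_right, sub_sq_comm]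

lemma add_sq_le_one_add_mul_sq (p q : ℝ) {t : ℝ} (ht : 0 < t) :
    (p + q) ^ 2 ≤ (1 + t⁻¹) * p ^ 2 + (1 + t) * q ^ 2 := by
  have hsq : 0 ≤ t⁻¹ * (p - t * q) ^ 2 := by positivity
  have hexpand : t⁻¹ * (p - t * q) ^ 2 = t⁻¹ * p ^ 2 - 2 * p * q + t * q ^ 2 := by
    field_simp
    ring
  linarith

lemma sqIncrement_add_le (hg : g.HasFiniteSupport) (v w : G) {t : ℝ} (ht : 0 < t) :
    sqIncrement g (v + w) ≤ (1 + t⁻¹) * sqIncrement g v + (1 + t) * sqIncrement g w := by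
  have hv : Summable fun x => (g (x + v) - g x) ^ 2 :=
    summable_of_hasFiniteSupport (hasFiniteSupport_sq_increment hg v)
  have hw : Summable fun x => (g (x + v + w) - g (x + v)) ^ 2 :=
    summable_of_hasFiniteSupport
      (hasFiniteSupport_comp_add (hasFiniteSupport_sq_increment hg w) v)
  have hvw : Summable fun x => (g (x + (v + w)) - g x) ^ 2 :=
    summable_of_hasFiniteSupport (hasFiniteSupport_sq_increment hg (v + w))
  have hshift : sqIncrement g w = ∑' x, (g (x + v + w) - g (x + v)) ^ 2 :=
    (tsum_comp_add (fun x => (g (x + w) - g x) ^ 2) v).symm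
  rw [hshift, sqIncrement, sqIncrement, ← tsum_mul_left, ← tsum_mul_left,
    ← (hv.mul_left _).tsum_add (hw.mul_left _)]
  refine hvw.tsum_le_tsum (fun x => ?_) ((hv.mul_left _).add (hw.mul_left _))
  have hsplit : g (x + (v + w)) - g x = (g (x + v) - g x) + (g (x + v + w) - g (x + v)) := by
    rw [add_assoc]; ring
  rw [hsplit]
  exact add_sq_le_one_add_mul_sq _ _ ht

lemma sqIncrement_sum_le (hg : g.HasFiniteSupport) {ι : Type*} (s : Finset ι) (w : ι → G) :
    sqIncrement g (∑ i ∈ s, w i) ≤ s.card * ∑ i ∈ s, sqIncrement g (w i) := by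
  induction s using Finset.induction_on with
  | empty => simp
  | insert i s hi ih =>
    rw [Finset.sum_insert hi, Finset.sum_insert hi, Finset.card_insert_of_notMem hi, add_comm (w i)]
    rcases s.eq_empty_or_nonempty with rfl | hs
    · simp
    have hcard : (0 : ℝ) < s.card := by exact_mod_cast hs.card_pos
    calc sqIncrement g (∑ i ∈ s, w i + w i)
        ≤ (1 + (s.card : ℝ)⁻¹) * sqIncrement g (∑ i ∈ s, w i)
          + (1 + s.card) * sqIncrement g (w i) := sqIncrement_add_le hg _ _ hcard
      _ ≤ (1 + (s.card : ℝ)⁻¹) * (s.card * ∑ i ∈ s, sqIncrement g (w i))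
          + (1 + s.card) * sqIncrement g (w i) := by gcongr
      _ = _ := by push_cast; field_simp; ring

lemma sqIncrement_nsmul_le (hg : g.HasFiniteSupport) (k : ℕ) (v : G) :
    sqIncrement g (k • v) ≤ (k : ℝ) ^ 2 * sqIncrement g v := by
  simpa [sq, mul_assoc] using sqIncrement_sum_le hg (Finset.range k) fun _ => v

lemma tsum_sq_eq_half_sqIncrement_add (hg : g.HasFiniteSupport) (v : G) :
    ∑' x, g x ^ 2 = sqIncrement g v / 2 + ∑' x, g x * g (x + v) := by
  have hsq : Summable fun x => g x ^ 2 := summable_of_hasFiniteSupport (hasFiniteSupport_sq hg)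
  have hsq' : Summable fun x => g (x + v) ^ 2 :=
    summable_of_hasFiniteSupport (hasFiniteSupport_comp_add (hasFiniteSupport_sq hg) v)
  have hmul : Summable fun x => g x * g (x + v) :=
    summable_of_hasFiniteSupport (Function.HasFiniteSupport.mul_left hg _)
  have hexpand : ∀ x, (g (x + v) - g x) ^ 2 = g (x + v) ^ 2 + g x ^ 2 - 2 * (g x * g (x + v)) :=
    fun x => by ring
  have hpolar : sqIncrement g v
      = (∑' x, g x ^ 2) + (∑' x, g x ^ 2) - 2 * ∑' x, g x * g (x + v) := by
    rw [sqIncrement, tsum_congr hexpand, (hsq'.add hsq).tsum_sub (hmul.mul_left 2),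
      hsq'.tsum_add hsq, tsum_comp_add (fun x => g x ^ 2), tsum_mul_left]
  linarith

lemma sum_tsum_mul_comp_add_le (hg : g.HasFiniteSupport) (hg0 : ∀ x, 0 ≤ g x) (A : Finset G) :
    ∑ v ∈ A, ∑' x, g x * g (x + v) ≤ (∑' x, g x) ^ 2 := by
  have hsum : Summable g := summable_of_hasFiniteSupport hg
  have htranslates : ∀ x, ∑ v ∈ A, g (x + v) ≤ ∑' y, g y := fun x => by
    have hx : Summable fun v => g (x + v) := hsum.comp_injective (add_right_injective x)
    exact (hx.sum_le_tsum A fun v _ => hg0 _).trans_eq ((Equiv.addLeft x).tsum_eq g)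
  have hmul : ∀ v, Summable fun x => g x * g (x + v) := fun v =>
    summable_of_hasFiniteSupport (Function.HasFiniteSupport.mul_left hg _)
  calc ∑ v ∈ A, ∑' x, g x * g (x + v) = ∑' x, g x * ∑ v ∈ A, g (x + v) := by
        simp only [Finset.mul_sum]
        exact (Summable.tsum_finsetSum fun v _ => hmul v).symm
    _ ≤ ∑' x, g x * ∑' y, g y :=
        (summable_of_hasFiniteSupport (Function.HasFiniteSupport.mul_left hg _)).tsum_le_tsum
          (fun x => mul_le_mul_of_nonneg_left (htranslates x) (hg0 x)) (hsum.mul_right _)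
    _ = (∑' x, g x) ^ 2 := by rw [tsum_mul_right, sq]

lemma tsum_sq_le_of_sqIncrement_le (hg : g.HasFiniteSupport) (hg0 : ∀ x, 0 ≤ g x) {A : Finset G}
    (hA : A.Nonempty) {D : ℝ} (hD : ∀ v ∈ A, sqIncrement g v ≤ D) :
    ∑' x, g x ^ 2 ≤ D / 2 + (A.card : ℝ)⁻¹ * (∑' x, g x) ^ 2 := by
  have hcard : (0 : ℝ) < A.card := by exact_mod_cast hA.card_pos
  have hsum : A.card * ∑' x, g x ^ 2 ≤ A.card * (D / 2) + (∑' x, g x) ^ 2 := calc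
    A.card * ∑' x, g x ^ 2 = ∑ v ∈ A, (sqIncrement g v / 2 + ∑' x, g x * g (x + v)) := by
      simp [← tsum_sq_eq_half_sqIncrement_add hg]
    _ = ∑ v ∈ A, sqIncrement g v / 2 + ∑ v ∈ A, ∑' x, g x * g (x + v) :=
      Finset.sum_add_distrib
    _ ≤ ∑ _v ∈ A, D / 2 + (∑' x, g x) ^ 2 := by
      gcongr with v hv
      · exact hD v hv
      · exact sum_tsum_mul_comp_add_le hg hg0 A
    _ = A.card * (D / 2) + (∑' x, g x) ^ 2 := by simp
  calc ∑' x, g x ^ 2 = (A.card : ℝ)⁻¹ * (A.card * ∑' x, g x ^ 2) :=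
        (inv_mul_cancel_left₀ hcard.ne' _).symm
    _ ≤ (A.card : ℝ)⁻¹ * (A.card * (D / 2) + (∑' x, g x) ^ 2) := by gcongr
    _ = D / 2 + (A.card : ℝ)⁻¹ * (∑' x, g x) ^ 2 := by
        rw [mul_add, inv_mul_cancel_left₀ hcard.ne']

/-- The box `{0, …, r - 1}^d`. -/
def box (d r : ℕ) : Finset (Zd d) := Fintype.piFinset fun _ => Finset.Ico 0 (r : ℤ)

lemma card_box (d r : ℕ) : (box d r).card = r ^ d := by simp [box]

lemma sqIncrement_le_of_mem_box {d r : ℕ} {g : Zd d → ℝ} (hg : g.HasFiniteSupport) {v : Zd d}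
    (hv : v ∈ box d r) :
    sqIncrement g v ≤ d * (r : ℝ) ^ 2 * ∑ i, sqIncrement g (Pi.single i 1) := by
  have hcoord : ∀ i, 0 ≤ v i ∧ v i < r := by simpa [box] using hv
  have hdecomp : v = ∑ i, (v i).toNat • (Pi.single i 1 : Zd d) := by
    ext j
    simp [Finset.sum_apply, Pi.single_apply, hcoord]
  calc sqIncrement g v ≤ d * ∑ i, sqIncrement g ((v i).toNat • Pi.single i 1) := by
        conv_lhs => rw [hdecomp]
        simpa using sqIncrement_sum_le hg Finset.univ fun i => (v i).toNat • (Pi.single i 1 : Zd d)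
    _ ≤ d * ∑ i, (r : ℝ) ^ 2 * sqIncrement g (Pi.single i 1) := by
        gcongr with i
        refine (sqIncrement_nsmul_le hg _ _).trans ?_
        have := sqIncrement_nonneg g (Pi.single i 1)
        have : (v i).toNat ≤ r := by have := hcoord i; lia
        gcongr
    _ = d * (r : ℝ) ^ 2 * ∑ i, sqIncrement g (Pi.single i 1) := by
        rw [← Finset.mul_sum, mul_assoc]

/-- Optimizing over `r` turns this into the usual multiplicative Nash inequality. -/
lemma nash_inequality {d r : ℕ} (hr : 1 ≤ r) {g : Zd d → ℝ} (hg : g.HasFiniteSupport)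
    (hg0 : ∀ x, 0 ≤ g x) :
    ∑' x, g x ^ 2 ≤ d * (r : ℝ) ^ 2 * (∑ i, sqIncrement g (Pi.single i 1)) / 2
      + ((r : ℝ) ^ d)⁻¹ * (∑' x, g x) ^ 2 := by
  have hbox : (box d r).Nonempty := Finset.card_pos.1 (by rw [card_box]; positivity)
  simpa [card_box] using
    tsum_sq_le_of_sqIncrement_le hg hg0 hbox fun v hv => sqIncrement_le_of_mem_box hg hv

end NashInequality

section MarkovOperator

variable {V : Type*} {μ : V → ℝ} {P P' R : Module.End ℝ (V → ℝ)}

lemma hasFiniteSupport_single [DecidableEq V] (y : V) (a : ℝ) :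
    (Pi.single y a : V → ℝ).HasFiniteSupport :=
  (Set.finite_singleton y).subset Pi.support_single_subset

lemma tsum_mul_single [DecidableEq V] (φ : V → ℝ) (y : V) :
    ∑' x, φ x * (Pi.single y 1 : V → ℝ) x = φ y := by
  rw [tsum_eq_single y fun x hx => by simp [hx]]
  simp

lemma apply_eq_tsum_single [DecidableEq V] (R : Module.End ℝ (V → ℝ)) {h : V → ℝ}
    (hh : h.HasFiniteSupport) (x : V) : R h x = ∑' w, R (Pi.single w 1) x * h w := by
  have hzero : ∀ w ∉ hh.toFinset, h w = 0 := fun w hw =>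
    Function.notMem_support.1 fun hw' => hw (hh.mem_toFinset.2 hw')
  have hdecomp : h = ∑ w ∈ hh.toFinset, h w • (Pi.single w 1 : V → ℝ) := by
    ext v
    simpa [Finset.sum_apply, Pi.single_apply] using hzero v
  rw [tsum_eq_sum fun w hw => by rw [hzero w hw, mul_zero]]
  conv_lhs => rw [hdecomp]
  simp only [map_sum, map_smul, Finset.sum_apply, Pi.smul_apply, smul_eq_mul, mul_comm]

/-- `P` is the transition operator of a Markov chain on `V` for which every state has finitely many
predecessors. The transition probability from `x` to `y` is encoded as `P (Pi.single y 1) x`. -/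
structure IsMarkovOperator (P : Module.End ℝ (V → ℝ)) : Prop where
  map_nonneg : ∀ {f : V → ℝ}, 0 ≤ f → 0 ≤ P f
  map_one : P 1 = 1
  hasFiniteSupport : ∀ {f : V → ℝ}, f.HasFiniteSupport → (P f).HasFiniteSupport

namespace IsMarkovOperator

lemma mul (hP : IsMarkovOperator P) (hR : IsMarkovOperator R) : IsMarkovOperator (P * R) where
  map_nonneg hf := hP.map_nonneg (hR.map_nonneg hf)
  map_one := by rw [Module.End.mul_apply, hR.map_one, hP.map_one]
  hasFiniteSupport hf := hP.hasFiniteSupport (hR.hasFiniteSupport hf)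

lemma pow (hP : IsMarkovOperator P) (k : ℕ) : IsMarkovOperator (P ^ k) := by
  induction k with
  | zero => exact ⟨id, rfl, id⟩
  | succ k ih => rw [pow_succ]; exact ih.mul hP

lemma mono (hP : IsMarkovOperator P) {f g : V → ℝ} (hfg : f ≤ g) : P f ≤ P g := by
  simpa only [map_sub, sub_nonneg] using hP.map_nonneg (sub_nonneg.2 hfg)

lemma apply_single_nonneg [DecidableEq V] (hP : IsMarkovOperator P) (x y : V) :
    0 ≤ P (Pi.single y 1) x :=
  hP.map_nonneg (Pi.single_nonneg.2 zero_le_one) x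

lemma apply_single_mul_le [DecidableEq V] (hP : IsMarkovOperator P) {f : V → ℝ} (hf : 0 ≤ f)
    (x y : V) : P (Pi.single y 1) x * f y ≤ P f x := by
  have hle : f y • (Pi.single y 1 : V → ℝ) ≤ f := fun z => by
    rcases eq_or_ne z y with rfl | hz
    · simp
    · simpa [hz] using hf z
  simpa [mul_comm] using hP.mono hle x

lemma pow_le_pow_apply_single_of_path [DecidableEq V] (hP : IsMarkovOperator P) {t : ℝ}
    (ht : 0 ≤ t) {γ : ℕ → V} (hγ : ∀ k, t ≤ P (Pi.single (γ (k + 1)) 1) (γ k)) (l k : ℕ) :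
    t ^ l ≤ (P ^ l) (Pi.single (γ (k + l)) 1) (γ k) := by
  induction l generalizing k with
  | zero => simp
  | succ l ih =>
    have ih' : t ^ l ≤ (P ^ l) (Pi.single (γ (k + (l + 1))) 1) (γ (k + 1)) := by
      simpa only [add_assoc, add_comm 1 l] using ih (k + 1)
    rw [pow_succ', pow_succ', Module.End.mul_apply]
    exact (mul_le_mul (hγ k) ih' (by positivity) (hP.apply_single_nonneg _ _)).trans
      (hP.apply_single_mul_le ((hP.pow l).map_nonneg (Pi.single_nonneg.2 zero_le_one)) _ _)

end IsMarkovOperator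

lemma kerpow_eq_pow_apply {d : ℕ} {Q : Zd d → Zd d → ℝ} {P : Module.End ℝ (Zd d → ℝ)}
    (hP : IsMarkovOperator P) (hQ : ∀ x y, Q x y = P (Pi.single y 1) x) (k : ℕ) (x y : Zd d) :
    kerpow Q k x y = (P ^ k) (Pi.single y 1) x := by
  induction k generalizing y with
  | zero => simp [kerpow, Pi.single_apply]
  | succ k ih =>
    rw [pow_succ, Module.End.mul_apply,
      apply_eq_tsum_single _ (hP.hasFiniteSupport (hasFiniteSupport_single y 1))]
    simp only [kerpow, ih, hQ]

/-- The measure with weights `μ` is invariant for `P`, tested on finitely supported functions. -/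
def IsInvariantWeight (μ : V → ℝ) (P : Module.End ℝ (V → ℝ)) : Prop :=
  ∀ f : V → ℝ, f.HasFiniteSupport → ∑' x, μ x * P f x = ∑' x, μ x * f x

lemma IsInvariantWeight.pow (hμ : IsInvariantWeight μ P) (hP : IsMarkovOperator P) (k : ℕ) :
    IsInvariantWeight μ (P ^ k) := fun f hf => by
  induction k with
  | zero => rfl
  | succ k ih => rw [pow_succ', Module.End.mul_apply, hμ _ ((hP.pow k).hasFiniteSupport hf), ih]

/-- `P'` is the adjoint of `P` with respect to the weights `μ`. Only one of the two test functions
has to be finitely supported, so that the other one may be constant. -/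
def AreAdjoint (μ : V → ℝ) (P P' : Module.End ℝ (V → ℝ)) : Prop :=
  ∀ f g : V → ℝ, f.HasFiniteSupport ∨ g.HasFiniteSupport →
    ∑' x, μ x * (f x * P g x) = ∑' x, μ x * (P' f x * g x)

namespace AreAdjoint

lemma symm (h : AreAdjoint μ P P') : AreAdjoint μ P' P := fun f g hfg => by
  simpa only [mul_comm] using (h g f hfg.symm).symm

lemma isInvariantWeight (h : AreAdjoint μ P P') (hP' : IsMarkovOperator P') :
    IsInvariantWeight μ P := fun f hf => by
  simpa [hP'.map_one] using h 1 f (Or.inr hf)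

lemma pow (h : AreAdjoint μ P P') (hP : IsMarkovOperator P) (hP' : IsMarkovOperator P') (k : ℕ) :
    AreAdjoint μ (P ^ k) (P' ^ k) := fun f g hfg => by
  induction k generalizing g with
  | zero => rfl
  | succ k ih =>
    rw [pow_succ, pow_succ', Module.End.mul_apply, Module.End.mul_apply,
      ih _ (hfg.imp_right hP.hasFiniteSupport),
      h _ _ (hfg.imp_left (hP'.pow k).hasFiniteSupport)]

lemma mul_apply [DecidableEq V] (h : AreAdjoint μ P P') (f : V → ℝ) (x : V) :
    μ x * P f x = ∑' w, μ w * (P' (Pi.single x 1) w * f w) := by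
  rw [← h _ _ (Or.inl (hasFiniteSupport_single x 1)), ← tsum_mul_single (fun w => μ w * P f w) x]
  exact tsum_congr fun w => by ring

lemma mul_apply_single [DecidableEq V] (h : AreAdjoint μ P P') (x y : V) :
    μ x * P (Pi.single y 1) x = μ y * P' (Pi.single x 1) y := by
  simp only [h.mul_apply, ← mul_assoc, tsum_mul_single]

end AreAdjoint

/-- The squared norm of `f` in `ℓ²(μ)`. -/
def weightedSqNorm (μ f : V → ℝ) : ℝ := ∑' x, μ x * f x ^ 2

/-- The variance of `h` under the transition probabilities of `P` started from `x`. Weighted by an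
invariant `μ`, it measures by how much `P` decreases the `ℓ²(μ)` norm of `h`. -/
def stepVariance (P : Module.End ℝ (V → ℝ)) (h : V → ℝ) (x : V) : ℝ :=
  P (h ^ 2) x - P h x ^ 2

lemma weightedSqNorm_single [DecidableEq V] (μ : V → ℝ) (y : V) :
    weightedSqNorm μ (Pi.single y 1) = μ y := by
  rw [← tsum_mul_single μ y]
  refine tsum_congr fun x => ?_
  rcases eq_or_ne x y with rfl | hx <;> simp [*]

lemma hasFiniteSupport_mul_sq (μ : V → ℝ) {f : V → ℝ} (hf : f.HasFiniteSupport) :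
    (fun x => μ x * f x ^ 2).HasFiniteSupport :=
  (hasFiniteSupport_sq hf).fun_mul_right μ

lemma tsum_mul_mul_le_weightedSqNorm (hμ : ∀ x, 0 ≤ μ x) {f g : V → ℝ} (hf : f.HasFiniteSupport)
    (hg : g.HasFiniteSupport) :
    ∑' x, μ x * (f x * g x) ≤ (weightedSqNorm μ f + weightedSqNorm μ g) / 2 := by
  have hsf : Summable fun x => μ x * f x ^ 2 :=
    summable_of_hasFiniteSupport (hasFiniteSupport_mul_sq μ hf)
  have hsg : Summable fun x => μ x * g x ^ 2 :=
    summable_of_hasFiniteSupport (hasFiniteSupport_mul_sq μ hg)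
  have hsfg : Summable fun x => μ x * (f x * g x) :=
    summable_of_hasFiniteSupport ((hg.fun_mul_right f).fun_mul_right μ)
  rw [weightedSqNorm, weightedSqNorm, ← hsf.tsum_add hsg, ← tsum_div_const]
  refine hsfg.tsum_le_tsum (fun x => ?_) ((hsf.add hsg).div_const 2)
  linarith [mul_le_mul_of_nonneg_left (two_mul_le_add_sq (f x) (g x)) (hμ x)]

namespace IsMarkovOperator

lemma single_mul_sq_le_stepVariance [DecidableEq V] (hP : IsMarkovOperator P) (h : V → ℝ)
    (x y : V) : P (Pi.single y 1) x * (h y - P h x) ^ 2 ≤ stepVariance P h x := by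
  set a := P h x with ha
  set f : V → ℝ := h ^ 2 - (2 * a) • h + (a ^ 2) • 1
  have hf : ∀ z, f z = (h z - a) ^ 2 := fun z => by
    simp only [f, Pi.add_apply, Pi.sub_apply, Pi.pow_apply, Pi.smul_apply, Pi.one_apply,
      smul_eq_mul]
    ring
  have hPf : P f x = stepVariance P h x := by
    simp only [f, map_add, map_sub, map_smul, hP.map_one, Pi.add_apply, Pi.sub_apply,
      Pi.smul_apply, smul_eq_mul, Pi.one_apply, stepVariance, ← ha]
    ring
  rw [← hf, ← hPf]
  exact hP.apply_single_mul_le (fun z => (sq_nonneg _).trans_eq (hf z).symm) x y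

lemma stepVariance_nonneg (hP : IsMarkovOperator P) (h : V → ℝ) (x : V) :
    0 ≤ stepVariance P h x := by
  classical
  exact (mul_nonneg (hP.apply_single_nonneg x x) (sq_nonneg _)).trans
    (hP.single_mul_sq_le_stepVariance h x x)

lemma hasSum_mul_stepVariance (hP : IsMarkovOperator P) (hμ : IsInvariantWeight μ P) {h : V → ℝ}
    (hh : h.HasFiniteSupport) :
    HasSum (fun x => μ x * stepVariance P h x) (weightedSqNorm μ h - weightedSqNorm μ (P h)) := by
  have hh2 : (h ^ 2).HasFiniteSupport := hasFiniteSupport_sq hh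
  have hfst : HasSum (fun x => μ x * P (h ^ 2) x) (weightedSqNorm μ h) := by
    have : HasSum (fun x => μ x * P (h ^ 2) x) (∑' x, μ x * P (h ^ 2) x) :=
      (summable_of_hasFiniteSupport ((hP.hasFiniteSupport hh2).fun_mul_right μ)).hasSum
    rwa [hμ _ hh2] at this
  have hsnd : HasSum (fun x => μ x * P h x ^ 2) (weightedSqNorm μ (P h)) :=
    (summable_of_hasFiniteSupport (hasFiniteSupport_mul_sq μ (hP.hasFiniteSupport hh))).hasSum
  simpa only [stepVariance, mul_sub] using hfst.sub hsnd

lemma weightedSqNorm_apply_le (hP : IsMarkovOperator P) (hμ : IsInvariantWeight μ P)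
    (hμ0 : ∀ x, 0 ≤ μ x) {h : V → ℝ} (hh : h.HasFiniteSupport) :
    weightedSqNorm μ (P h) ≤ weightedSqNorm μ h :=
  sub_nonneg.1 <| (hP.hasSum_mul_stepVariance hμ hh).nonneg fun x =>
    mul_nonneg (hμ0 x) (hP.stepVariance_nonneg h x)

lemma weightedSqNorm_pow_antitone (hP : IsMarkovOperator P) (hμ : IsInvariantWeight μ P)
    (hμ0 : ∀ x, 0 ≤ μ x) {h : V → ℝ} (hh : h.HasFiniteSupport) :
    Antitone fun k => weightedSqNorm μ ((P ^ k) h) :=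
  antitone_nat_of_succ_le fun k => by
    rw [pow_succ', Module.End.mul_apply]
    exact hP.weightedSqNorm_apply_le hμ hμ0 ((hP.pow k).hasFiniteSupport hh)

end IsMarkovOperator

/-- The sum of `P ^ r f` over `L` consecutive times. When `P ^ L` is lazy, averaging over time in
this way removes the effects of periodicity. -/
def timeSum (P : Module.End ℝ (V → ℝ)) (L : ℕ) (f : V → ℝ) (x : V) : ℝ :=
  ∑ r ∈ Finset.range L, (P ^ r) f x

/-- The variances at `x` of all the transitions of at most `B` steps applied to the functions
`P ^ r f` with `r < B`. -/
def localDissipation (P : Module.End ℝ (V → ℝ)) (B : ℕ) (f : V → ℝ) (x : V) : ℝ :=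
  ∑ r ∈ Finset.range B, ∑ j ∈ Finset.range (B + 1), stepVariance (P ^ j) ((P ^ r) f) x

lemma timeSum_sub_timeSum (P : Module.End ℝ (V → ℝ)) (L k : ℕ) (f : V → ℝ) (x y : V) :
    timeSum P L f y - timeSum P L f x
      = ∑ r ∈ Finset.range L, ((P ^ r) f y - (P ^ (k + r)) f x)
        + ∑ j ∈ Finset.range k, ((P ^ (L + j)) f x - (P ^ j) f x) := by
  have hkL := Finset.sum_range_add (fun r => (P ^ r) f x) k L
  have hLk := Finset.sum_range_add (fun r => (P ^ r) f x) L k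
  rw [add_comm k L] at hkL
  simp only [timeSum, Finset.sum_sub_distrib]
  linarith

namespace IsMarkovOperator

lemma timeSum_nonneg (hP : IsMarkovOperator P) (L : ℕ) {f : V → ℝ} (hf : 0 ≤ f) (x : V) :
    0 ≤ timeSum P L f x :=
  Finset.sum_nonneg fun r _ => (hP.pow r).map_nonneg hf x

lemma le_timeSum (hP : IsMarkovOperator P) {L : ℕ} (hL : 0 < L) {f : V → ℝ} (hf : 0 ≤ f) (x : V) :
    f x ≤ timeSum P L f x :=
  Finset.single_le_sum (f := fun r => (P ^ r) f x) (fun r _ => (hP.pow r).map_nonneg hf x)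
    (Finset.mem_range.2 hL)

lemma hasFiniteSupport_timeSum (hP : IsMarkovOperator P) (L : ℕ) {f : V → ℝ}
    (hf : f.HasFiniteSupport) : (timeSum P L f).HasFiniteSupport :=
  Function.HasFiniteSupport.sum (fun r => (hP.pow r).hasFiniteSupport hf) _

lemma stepVariance_le_localDissipation (hP : IsMarkovOperator P) {B r j : ℕ} (hr : r < B)
    (hj : j ≤ B) (f : V → ℝ) (x : V) :
    stepVariance (P ^ j) ((P ^ r) f) x ≤ localDissipation P B f x :=
  have hnonneg : ∀ r j, 0 ≤ stepVariance (P ^ j) ((P ^ r) f) x := fun _ j =>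
    (hP.pow j).stepVariance_nonneg _ x
  (Finset.single_le_sum (fun j _ => hnonneg r j) (Finset.mem_range_succ_iff.2 hj)).trans <|
    Finset.single_le_sum
      (f := fun r => ∑ j ∈ Finset.range (B + 1), stepVariance (P ^ j) ((P ^ r) f) x)
      (fun r _ => Finset.sum_nonneg fun j _ => hnonneg r j) (Finset.mem_range.2 hr)

lemma localDissipation_nonneg (hP : IsMarkovOperator P) (B : ℕ) (f : V → ℝ) (x : V) :
    0 ≤ localDissipation P B f x :=
  Finset.sum_nonneg fun _ _ => Finset.sum_nonneg fun j _ => (hP.pow j).stepVariance_nonneg _ x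

lemma abs_sub_le_sqrt_localDissipation [DecidableEq V] (hP : IsMarkovOperator P) {κ : ℝ}
    (hκ : 0 < κ) {B r j : ℕ} (hr : r < B) (hj : j ≤ B) {x y : V}
    (hxy : κ ≤ (P ^ j) (Pi.single y 1) x) (f : V → ℝ) :
    |(P ^ r) f y - (P ^ (j + r)) f x| ≤ √(κ⁻¹ * localDissipation P B f x) := by
  refine Real.abs_le_sqrt ((le_inv_mul_iff₀ hκ).2 ?_)
  rw [pow_add, Module.End.mul_apply]
  calc κ * ((P ^ r) f y - (P ^ j) ((P ^ r) f) x) ^ 2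
      ≤ (P ^ j) (Pi.single y 1) x * ((P ^ r) f y - (P ^ j) ((P ^ r) f) x) ^ 2 := by gcongr
    _ ≤ stepVariance (P ^ j) ((P ^ r) f) x := (hP.pow j).single_mul_sq_le_stepVariance _ x y
    _ ≤ localDissipation P B f x := hP.stepVariance_le_localDissipation hr hj f x

lemma sq_timeSum_sub_le [DecidableEq V] (hP : IsMarkovOperator P) {κ : ℝ} (hκ : 0 < κ) {L N k : ℕ}
    (hk : k ≤ N) {x y : V} (hlazy : κ ≤ (P ^ L) (Pi.single x 1) x)
    (hxy : κ ≤ (P ^ k) (Pi.single y 1) x) (f : V → ℝ) :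
    (timeSum P L f y - timeSum P L f x) ^ 2
      ≤ (L + N : ℕ) ^ 2 * (κ⁻¹ * localDissipation P (L + N) f x) := by
  set s := √(κ⁻¹ * localDissipation P (L + N) f x) with hs
  have hmove : ∀ r ∈ Finset.range L, |(P ^ r) f y - (P ^ (k + r)) f x| ≤ s := fun r hr =>
    hP.abs_sub_le_sqrt_localDissipation hκ
      ((Finset.mem_range.1 hr).trans_le (Nat.le_add_right L N)) (by lia) hxy f
  have hwait : ∀ j ∈ Finset.range k, |(P ^ (L + j)) f x - (P ^ j) f x| ≤ s := fun j hj => by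
    have : j < k := Finset.mem_range.1 hj
    rw [abs_sub_comm]
    exact hP.abs_sub_le_sqrt_localDissipation hκ (by lia) (Nat.le_add_right L N) hlazy f
  have habs : |timeSum P L f y - timeSum P L f x| ≤ (L + N : ℕ) * s := calc
    |timeSum P L f y - timeSum P L f x| ≤ L * s + k * s := by
      rw [timeSum_sub_timeSum P L k]
      refine (abs_add_le _ _).trans (add_le_add ?_ ?_) <;>
        refine (Finset.abs_sum_le_sum_abs _ _).trans ?_
      · simpa using Finset.sum_le_card_nsmul _ _ _ hmove
      · simpa using Finset.sum_le_card_nsmul _ _ _ hwait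
    _ ≤ (L + N : ℕ) * s := by
      have : (k : ℝ) * s ≤ N * s := by gcongr
      push_cast
      linarith
  have hdiss : 0 ≤ κ⁻¹ * localDissipation P (L + N) f x :=
    mul_nonneg (inv_nonneg.2 hκ.le) (hP.localDissipation_nonneg _ f x)
  calc (timeSum P L f y - timeSum P L f x) ^ 2 ≤ ((L + N : ℕ) * s) ^ 2 := by
        rw [← sq_abs]; gcongr
    _ = _ := by rw [mul_pow, hs, Real.sq_sqrt hdiss]

lemma hasSum_mul_localDissipation (hP : IsMarkovOperator P) (hμ : IsInvariantWeight μ P) (B : ℕ)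
    {f : V → ℝ} (hf : f.HasFiniteSupport) :
    HasSum (fun x => μ x * localDissipation P B f x)
      (∑ r ∈ Finset.range B, ∑ j ∈ Finset.range (B + 1),
        (weightedSqNorm μ ((P ^ r) f) - weightedSqNorm μ ((P ^ (j + r)) f))) := by
  simp only [localDissipation, Finset.mul_sum, pow_add, Module.End.mul_apply]
  exact hasSum_sum fun r _ => hasSum_sum fun j _ =>
    (hP.pow j).hasSum_mul_stepVariance (hμ.pow hP j) ((hP.pow r).hasFiniteSupport hf)

lemma tsum_mul_localDissipation_le (hP : IsMarkovOperator P) (hμ : IsInvariantWeight μ P)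
    (hμ0 : ∀ x, 0 ≤ μ x) (B : ℕ) {f : V → ℝ} (hf : f.HasFiniteSupport) :
    ∑' x, μ x * localDissipation P B f x
      ≤ B * (B + 1) * (weightedSqNorm μ f - weightedSqNorm μ ((P ^ (2 * B)) f)) := by
  have hanti := hP.weightedSqNorm_pow_antitone hμ hμ0 hf
  rw [(hP.hasSum_mul_localDissipation hμ B hf).tsum_eq]
  calc _ ≤ ∑ _r ∈ Finset.range B, ∑ _j ∈ Finset.range (B + 1),
        (weightedSqNorm μ f - weightedSqNorm μ ((P ^ (2 * B)) f)) := by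
        refine Finset.sum_le_sum fun r hr => Finset.sum_le_sum fun j hj => ?_
        rw [Finset.mem_range] at hr hj
        exact sub_le_sub (hanti (Nat.zero_le r)) (hanti (by lia))
    _ = _ := by
        simp only [Finset.sum_const, Finset.card_range, nsmul_eq_mul]
        push_cast
        ring

end IsMarkovOperator

end MarkovOperator

section UniformWalk

/-- From every `x`, the chain with transition operator `P` moves to `x + v` in at most `N` steps,
with probability at least `κ` for some number of steps depending on `x`. -/
def MovesBy {G : Type*} [AddCommGroup G] [DecidableEq G] (P : Module.End ℝ (G → ℝ)) (N : ℕ) (κ : ℝ)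
    (v : G) : Prop :=
  ∀ x, ∃ k ≤ N, κ ≤ (P ^ k) (Pi.single (x + v) 1) x

lemma IsMarkovOperator.sqIncrement_timeSum_le {G : Type*} [AddCommGroup G] [DecidableEq G]
    {μ : G → ℝ} {P : Module.End ℝ (G → ℝ)} (hP : IsMarkovOperator P) (hμ : IsInvariantWeight μ P)
    {c κ : ℝ} {L N : ℕ} (hc : 0 < c) (hμc : ∀ x, c ≤ μ x) (hκ : 0 < κ)
    (hlazy : ∀ x, κ ≤ (P ^ L) (Pi.single x 1) x) {v : G} (hv : MovesBy P N κ v) {f : G → ℝ}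
    (hf : f.HasFiniteSupport) :
    sqIncrement (timeSum P L f) v ≤ (c * κ)⁻¹ * ((L + N : ℕ) ^ 3 * ((L + N : ℕ) + 1)) *
      (weightedSqNorm μ f - weightedSqNorm μ ((P ^ (2 * (L + N))) f)) := by
  set B := L + N
  have hpointwise : ∀ x, (timeSum P L f (x + v) - timeSum P L f x) ^ 2
      ≤ (c * κ)⁻¹ * B ^ 2 * (μ x * localDissipation P B f x) := fun x => by
    obtain ⟨k, hk, hxv⟩ := hv x
    have hdiss := hP.localDissipation_nonneg B f x
    have hμx : 1 ≤ c⁻¹ * μ x := (one_le_inv_mul₀ hc).2 (hμc x)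
    calc (timeSum P L f (x + v) - timeSum P L f x) ^ 2
        ≤ B ^ 2 * (κ⁻¹ * (1 * localDissipation P B f x)) := by
          rw [one_mul]; exact hP.sq_timeSum_sub_le hκ hk (hlazy x) hxv f
      _ ≤ B ^ 2 * (κ⁻¹ * (c⁻¹ * μ x * localDissipation P B f x)) := by gcongr
      _ = _ := by rw [mul_inv]; ring
  have hsum : Summable fun x => μ x * localDissipation P B f x :=
    (hP.hasSum_mul_localDissipation hμ B hf).summable
  have hsq : Summable fun x => (timeSum P L f (x + v) - timeSum P L f x) ^ 2 :=
    summable_of_hasFiniteSupport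
      (hasFiniteSupport_sq_increment (hP.hasFiniteSupport_timeSum L hf) v)
  calc sqIncrement (timeSum P L f) v
      ≤ (c * κ)⁻¹ * B ^ 2 * ∑' x, μ x * localDissipation P B f x := by
        rw [← tsum_mul_left]; exact hsq.tsum_le_tsum hpointwise (hsum.mul_left _)
    _ ≤ (c * κ)⁻¹ * B ^ 2 *
        (B * (B + 1) * (weightedSqNorm μ f - weightedSqNorm μ ((P ^ (2 * B)) f))) := by
        gcongr
        exact hP.tsum_mul_localDissipation_le hμ (fun x => hc.le.trans (hμc x)) B hf
    _ = _ := by ring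

/-- The assumptions of the heat kernel bound: `P` is a Markov operator on `ℤ^d` with invariant
weights between `c` and `C`, it returns to its starting point in exactly `L` steps with probability
at least `κ`, and it moves within `N` steps along every axis, in at least one of the two
directions. -/
structure IsUniformWalk {d : ℕ} (c C κ : ℝ) (L N : ℕ) (μ : Zd d → ℝ)
    (P : Module.End ℝ (Zd d → ℝ)) : Prop where
  isMarkovOperator : IsMarkovOperator P
  isInvariantWeight : IsInvariantWeight μ P
  le_weight : ∀ x, c ≤ μ x
  weight_le : ∀ x, μ x ≤ C
  lazy : ∀ x, κ ≤ (P ^ L) (Pi.single x 1) x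
  movesBy : ∀ i, MovesBy P N κ (Pi.single i 1) ∨ MovesBy P N κ (-Pi.single i 1)

namespace IsUniformWalk

variable {d L N : ℕ} {c C κ : ℝ} {μ : Zd d → ℝ} {P P' : Module.End ℝ (Zd d → ℝ)} {f : Zd d → ℝ}

lemma pos (h : IsUniformWalk c C κ L N μ P) (hc : 0 < c) : 0 < C :=
  hc.trans_le ((h.le_weight 0).trans (h.weight_le 0))

lemma adjoint (h : IsUniformWalk c C κ L N μ P) (hP' : IsMarkovOperator P')
    (hadj : AreAdjoint μ P P') (hc : 0 < c) (hκ : 0 ≤ κ) :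
    IsUniformWalk c C (κ * (c / C)) L N μ P' where
  isMarkovOperator := hP'
  isInvariantWeight := hadj.symm.isInvariantWeight h.isMarkovOperator
  le_weight := h.le_weight
  weight_le := h.weight_le
  lazy x := by
    have hC : 0 < C := h.pos hc
    have hcC : c ≤ C := (h.le_weight x).trans (h.weight_le x)
    have hx := (hadj.pow h.isMarkovOperator hP' L).mul_apply_single x x
    rw [← mul_left_cancel₀ (hc.trans_le (h.le_weight x)).ne' hx]
    exact (mul_le_of_le_one_right hκ ((div_le_one hC).2 hcC)).trans (h.lazy x)
  movesBy i := by
    have hC : 0 < C := h.pos hc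
    have hreverse : ∀ v, MovesBy P N κ v → MovesBy P' N (κ * (c / C)) (-v) := fun v hv x => by
      obtain ⟨k, hk, hmove⟩ := hv (x + -v)
      rw [neg_add_cancel_right] at hmove
      refine ⟨k, hk, ?_⟩
      rw [← mul_div_assoc, div_le_iff₀ hC]
      calc κ * c ≤ (P ^ k) (Pi.single x 1) (x + -v) * μ (x + -v) :=
            mul_le_mul hmove (h.le_weight _) hc.le (hκ.trans hmove)
        _ = μ x * (P' ^ k) (Pi.single (x + -v) 1) x := by
            rw [mul_comm, (hadj.pow h.isMarkovOperator hP' k).mul_apply_single]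
        _ ≤ (P' ^ k) (Pi.single (x + -v) 1) x * C := by
            rw [mul_comm]
            exact mul_le_mul_of_nonneg_left (h.weight_le x) ((hP'.pow k).apply_single_nonneg _ _)
    exact (h.movesBy i).symm.imp (fun hv => neg_neg (Pi.single i 1 : Zd d) ▸ hreverse _ hv)
      (hreverse _)

lemma weightedSqNorm_le_mul_tsum_timeSum_sq (h : IsUniformWalk c C κ L N μ P) (hL : 0 < L)
    (hc : 0 < c) (hf : f.HasFiniteSupport) (hf0 : 0 ≤ f) :
    weightedSqNorm μ f ≤ C * ∑' x, timeSum P L f x ^ 2 := by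
  have hsum : Summable fun x => timeSum P L f x ^ 2 := summable_of_hasFiniteSupport
    (hasFiniteSupport_sq (h.isMarkovOperator.hasFiniteSupport_timeSum L hf))
  rw [weightedSqNorm, ← tsum_mul_left]
  refine (summable_of_hasFiniteSupport (hasFiniteSupport_mul_sq μ hf)).tsum_le_tsum
    (fun x => ?_) (hsum.mul_left C)
  exact mul_le_mul (h.weight_le x)
    (pow_le_pow_left₀ (hf0 x) (h.isMarkovOperator.le_timeSum hL hf0 x) 2) (sq_nonneg _)
    (h.pos hc).le

lemma tsum_timeSum_le (h : IsUniformWalk c C κ L N μ P) (hc : 0 < c) (hf : f.HasFiniteSupport)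
    (hf0 : 0 ≤ f) : ∑' x, timeSum P L f x ≤ L / c * ∑' x, μ x * f x := by
  have hfin : ∀ r, ((P ^ r) f).HasFiniteSupport := fun r =>
    (h.isMarkovOperator.pow r).hasFiniteSupport hf
  have hmass : ∀ r, ∑' x, (P ^ r) f x ≤ c⁻¹ * ∑' x, μ x * f x := fun r => by
    rw [le_inv_mul_iff₀ hc, ← h.isInvariantWeight.pow h.isMarkovOperator r f hf, ← tsum_mul_left]
    exact ((summable_of_hasFiniteSupport (hfin r)).mul_left c).tsum_le_tsum
      (fun x => mul_le_mul_of_nonneg_right (h.le_weight x)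
        ((h.isMarkovOperator.pow r).map_nonneg hf0 x))
      (summable_of_hasFiniteSupport ((hfin r).fun_mul_right μ))
  calc ∑' x, timeSum P L f x = ∑ r ∈ Finset.range L, ∑' x, (P ^ r) f x :=
        Summable.tsum_finsetSum fun r _ => summable_of_hasFiniteSupport (hfin r)
    _ ≤ ∑ _r ∈ Finset.range L, c⁻¹ * ∑' x, μ x * f x := Finset.sum_le_sum fun r _ => hmass r
    _ = L / c * ∑' x, μ x * f x := by
        rw [Finset.sum_const, Finset.card_range, nsmul_eq_mul, div_eq_mul_inv, mul_assoc]

lemma sum_sqIncrement_timeSum_le (h : IsUniformWalk c C κ L N μ P) (hc : 0 < c) (hκ : 0 < κ)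
    (hf : f.HasFiniteSupport) :
    ∑ i, sqIncrement (timeSum P L f) (Pi.single i 1)
      ≤ d * ((c * κ)⁻¹ * ((L + N : ℕ) ^ 3 * ((L + N : ℕ) + 1)) *
        (weightedSqNorm μ f - weightedSqNorm μ ((P ^ (2 * (L + N))) f))) := by
  have hdir : ∀ i, sqIncrement (timeSum P L f) (Pi.single i 1)
      ≤ (c * κ)⁻¹ * ((L + N : ℕ) ^ 3 * ((L + N : ℕ) + 1)) *
        (weightedSqNorm μ f - weightedSqNorm μ ((P ^ (2 * (L + N))) f)) := fun i => by
    have hmove : ∀ v, MovesBy P N κ v → sqIncrement (timeSum P L f) v ≤ _ := fun v hv =>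
      h.isMarkovOperator.sqIncrement_timeSum_le h.isInvariantWeight hc h.le_weight hκ h.lazy hv hf
    rcases h.movesBy i with hi | hi
    · exact hmove _ hi
    · exact sqIncrement_neg _ (Pi.single i 1 : Zd d) ▸ hmove _ hi
  simpa only [Finset.card_univ, Fintype.card_fin, nsmul_eq_mul] using
    Finset.sum_le_card_nsmul Finset.univ _ _ fun i _ => hdir i

lemma weightedSqNorm_le_of_nash (h : IsUniformWalk c C κ L N μ P) (hL : 0 < L) (hc : 0 < c)
    (hκ : 0 < κ) (hf : f.HasFiniteSupport) (hf0 : 0 ≤ f) {r : ℕ} (hr : 1 ≤ r) :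
    weightedSqNorm μ f
      ≤ C * d ^ 2 * ((c * κ)⁻¹ * ((L + N : ℕ) ^ 3 * ((L + N : ℕ) + 1))) / 2 * (r : ℝ) ^ 2 *
          (weightedSqNorm μ f - weightedSqNorm μ ((P ^ (2 * (L + N))) f))
        + C * (L / c * ∑' x, μ x * f x) ^ 2 * ((r : ℝ) ^ d)⁻¹ := by
  have hC : 0 < C := h.pos hc
  have hg0 := h.isMarkovOperator.timeSum_nonneg L hf0
  have hmass := h.tsum_timeSum_le hc hf hf0
  have hmass0 : 0 ≤ ∑' x, timeSum P L f x := tsum_nonneg hg0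
  calc weightedSqNorm μ f ≤ C * ∑' x, timeSum P L f x ^ 2 :=
        h.weightedSqNorm_le_mul_tsum_timeSum_sq hL hc hf hf0
    _ ≤ C * (d * (r : ℝ) ^ 2 * (∑ i, sqIncrement (timeSum P L f) (Pi.single i 1)) / 2
          + ((r : ℝ) ^ d)⁻¹ * (∑' x, timeSum P L f x) ^ 2) := by
        gcongr
        exact nash_inequality hr (h.isMarkovOperator.hasFiniteSupport_timeSum L hf) hg0
    _ ≤ C * (d * (r : ℝ) ^ 2 * (d * ((c * κ)⁻¹ * ((L + N : ℕ) ^ 3 * ((L + N : ℕ) + 1)) *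
            (weightedSqNorm μ f - weightedSqNorm μ ((P ^ (2 * (L + N))) f)))) / 2
          + ((r : ℝ) ^ d)⁻¹ * (L / c * ∑' x, μ x * f x) ^ 2) := by
        gcongr
        exact h.sum_sqIncrement_timeSum_le hc hκ hf
    _ = _ := by ring

lemma weightedSqNorm_pow_single_le (h : IsUniformWalk c C κ L N μ P) (hc : 0 < c) (y : Zd d)
    (k : ℕ) : weightedSqNorm μ ((P ^ k) (Pi.single y 1)) ≤ C := by
  have := h.isMarkovOperator.weightedSqNorm_pow_antitone h.isInvariantWeight
    (fun x => hc.le.trans (h.le_weight x)) (hasFiniteSupport_single y 1) (Nat.zero_le k)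
  exact (this.trans_eq (weightedSqNorm_single μ y)).trans (h.weight_le y)

lemma tsum_mul_pow_single_le (h : IsUniformWalk c C κ L N μ P) (y : Zd d) (k : ℕ) :
    ∑' x, μ x * (P ^ k) (Pi.single y 1) x ≤ C := by
  rw [h.isInvariantWeight.pow h.isMarkovOperator k _ (hasFiniteSupport_single y 1),
    tsum_mul_single]
  exact h.weight_le y

lemma weightedSqNorm_pow_single_le_of_nash (h : IsUniformWalk c C κ L N μ P) (hL : 0 < L)
    (hc : 0 < c) (hκ : 0 < κ) (y : Zd d) (k : ℕ) {r : ℕ} (hr : 1 ≤ r) :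
    weightedSqNorm μ ((P ^ k) (Pi.single y 1))
      ≤ C * d ^ 2 * ((c * κ)⁻¹ * ((L + N : ℕ) ^ 3 * ((L + N : ℕ) + 1))) / 2 * (r : ℝ) ^ 2 *
          (weightedSqNorm μ ((P ^ k) (Pi.single y 1))
            - weightedSqNorm μ ((P ^ (k + 2 * (L + N))) (Pi.single y 1)))
        + C * (L / c * C) ^ 2 * ((r : ℝ) ^ d)⁻¹ := by
  have hC : 0 < C := h.pos hc
  have hPk := h.isMarkovOperator.pow k
  have hpos : 0 ≤ (P ^ k) (Pi.single y 1) := hPk.map_nonneg (Pi.single_nonneg.2 zero_le_one)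
  have hmass0 : 0 ≤ ∑' x, μ x * (P ^ k) (Pi.single y 1) x :=
    tsum_nonneg fun x => mul_nonneg (hc.le.trans (h.le_weight x)) (hpos x)
  rw [add_comm k, pow_add, Module.End.mul_apply]
  refine (h.weightedSqNorm_le_of_nash hL hc hκ
    (hPk.hasFiniteSupport (hasFiniteSupport_single y 1)) hpos hr).trans ?_
  gcongr
  exact h.tsum_mul_pow_single_le y k

end IsUniformWalk

lemma rpow_neg_natDiv_add_one_le {s : ℝ} (hs : 0 ≤ s) {B : ℕ} (hB : 0 < B) (k : ℕ) :
    (((k / B : ℕ) : ℝ) + 1) ^ (-s) ≤ (B : ℝ) ^ s * ((k : ℝ) + 1) ^ (-s) :=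
  rpow_neg_le_rpow_mul_rpow_neg hs (by exact_mod_cast hB) (by positivity)
    (by exact_mod_cast Nat.lt_mul_div_succ k hB)

lemma sq_rpow_neg_half {r : ℝ} (hr : 0 ≤ r) (d : ℕ) : (r ^ 2) ^ (-((d : ℝ) / 2)) = (r ^ d)⁻¹ := by
  rw [← Real.rpow_natCast r 2, ← Real.rpow_mul hr, ← Real.rpow_natCast r d, ← Real.rpow_neg hr]
  congr 1
  push_cast
  ring

lemma exists_weightedSqNorm_pow_single_le (d N : ℕ) {L : ℕ} (hL : 0 < L) {c C κ : ℝ} (hc : 0 < c)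
    (hC : 0 ≤ C) (hκ : 0 < κ) :
    ∃ A : ℝ, 0 < A ∧ ∀ (μ : Zd d → ℝ) (P : Module.End ℝ (Zd d → ℝ)), IsUniformWalk c C κ L N μ P →
      ∀ (y : Zd d) (k : ℕ),
        weightedSqNorm μ ((P ^ k) (Pi.single y 1)) ≤ A * ((k : ℝ) + 1) ^ (-((d : ℝ) / 2)) := by
  set B := 2 * (L + N)
  set a := C * d ^ 2 * ((c * κ)⁻¹ * ((L + N : ℕ) ^ 3 * ((L + N : ℕ) + 1))) / 2
  have hB : 0 < B := by positivity
  have ha : 0 ≤ a := by positivity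
  obtain ⟨A, hA, hdecay⟩ := exists_le_rpow_of_nash_recursion (s := (d : ℝ) / 2) (a := 1 + a)
    (b := C * (L / c * C) ^ 2) (by positivity) (by linarith) (by positivity) hC
  refine ⟨A * (B : ℝ) ^ ((d : ℝ) / 2), by positivity, fun μ P h y k => ?_⟩
  have hanti := h.isMarkovOperator.weightedSqNorm_pow_antitone h.isInvariantWeight
    (fun x => hc.le.trans (h.le_weight x)) (hasFiniteSupport_single y 1)
  have hblock := hdecay (fun j => weightedSqNorm μ ((P ^ (B * j)) (Pi.single y 1)))
    (fun j => h.weightedSqNorm_pow_single_le hc y (B * j)) fun j r hr => by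
      rw [mul_add_one, sq_rpow_neg_half (Nat.cast_nonneg r)]
      refine (h.weightedSqNorm_pow_single_le_of_nash hL hc hκ y (B * j) hr).trans ?_
      gcongr
      · exact sub_nonneg.2 (hanti (Nat.le_add_right _ _))
      · exact le_add_of_nonneg_left zero_le_one
  calc weightedSqNorm μ ((P ^ k) (Pi.single y 1))
      ≤ weightedSqNorm μ ((P ^ (B * (k / B))) (Pi.single y 1)) := hanti (Nat.mul_div_le k B)
    _ ≤ A * (((k / B : ℕ) : ℝ) + 1) ^ (-((d : ℝ) / 2)) := hblock (k / B)
    _ ≤ A * ((B : ℝ) ^ ((d : ℝ) / 2) * ((k : ℝ) + 1) ^ (-((d : ℝ) / 2))) := by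
        gcongr
        exact rpow_neg_natDiv_add_one_le (by positivity) hB k
    _ = _ := by rw [mul_assoc]

lemma mul_pow_add_apply_single_le {V : Type*} [DecidableEq V] {μ : V → ℝ}
    {P P' : Module.End ℝ (V → ℝ)} (hP : IsMarkovOperator P) (hP' : IsMarkovOperator P')
    (hadj : AreAdjoint μ P P') (hμ : ∀ x, 0 ≤ μ x) (a b : ℕ) (x y : V) :
    μ x * (P ^ (a + b)) (Pi.single y 1) x
      ≤ (weightedSqNorm μ ((P' ^ a) (Pi.single x 1))
        + weightedSqNorm μ ((P ^ b) (Pi.single y 1))) / 2 := by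
  rw [pow_add, Module.End.mul_apply, (hadj.pow hP hP' a).mul_apply]
  exact tsum_mul_mul_le_weightedSqNorm hμ
    ((hP'.pow a).hasFiniteSupport (hasFiniteSupport_single x 1))
    ((hP.pow b).hasFiniteSupport (hasFiniteSupport_single y 1))

lemma exists_pow_apply_single_le (d N : ℕ) {L : ℕ} (hL : 0 < L) {c C κ : ℝ} (hc : 0 < c)
    (hC : 0 < C) (hκ : 0 < κ) :
    ∃ A : ℝ, 0 < A ∧ ∀ (μ : Zd d → ℝ) (P P' : Module.End ℝ (Zd d → ℝ)),
      IsUniformWalk c C κ L N μ P → IsMarkovOperator P' → AreAdjoint μ P P' →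
      ∀ n : ℕ, 1 ≤ n → ∀ x y : Zd d,
        (P ^ n) (Pi.single y 1) x ≤ A * μ y * (n : ℝ) ^ (-((d : ℝ) / 2)) := by
  obtain ⟨A, hA, hdecay⟩ := exists_weightedSqNorm_pow_single_le d N hL hc hC.le hκ
  obtain ⟨A', hA', hdecay'⟩ := exists_weightedSqNorm_pow_single_le d N hL hc hC.le
    (show 0 < κ * (c / C) by positivity)
  refine ⟨(A' + A) / 2 * 2 ^ ((d : ℝ) / 2) / c / c, by positivity,
    fun μ P P' h hP' hadj n hn x y => ?_⟩
  have hμ0 : ∀ x, 0 < μ x := fun x => hc.trans_le (h.le_weight x)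
  set ρ := 2 ^ ((d : ℝ) / 2) * (n : ℝ) ^ (-((d : ℝ) / 2)) with hρ
  have hhalf : ∀ k : ℕ, n ≤ 2 * (k + 1) → ((k : ℝ) + 1) ^ (-((d : ℝ) / 2)) ≤ ρ := fun k hk =>
    rpow_neg_le_rpow_mul_rpow_neg (by positivity) two_pos (by positivity) (by exact_mod_cast hk)
  have hsplit : n / 2 + (n - n / 2) = n := by lia
  have hweighted : μ x * (P ^ n) (Pi.single y 1) x ≤ (A' + A) / 2 * ρ := calc
    μ x * (P ^ n) (Pi.single y 1) x
        ≤ (weightedSqNorm μ ((P' ^ (n / 2)) (Pi.single x 1))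
          + weightedSqNorm μ ((P ^ (n - n / 2)) (Pi.single y 1))) / 2 := by
        simpa only [hsplit] using mul_pow_add_apply_single_le h.isMarkovOperator hP' hadj
          (fun x => (hμ0 x).le) (n / 2) (n - n / 2) x y
    _ ≤ (A' * ρ + A * ρ) / 2 := by
        gcongr
        · refine (hdecay' μ P' (h.adjoint hP' hadj hc hκ.le) x (n / 2)).trans ?_
          gcongr
          exact hhalf _ (by lia)
        · refine (hdecay μ P h y (n - n / 2)).trans ?_
          gcongr
          exact hhalf _ (by lia)
    _ = (A' + A) / 2 * ρ := by ring
  have hp0 := (h.isMarkovOperator.pow n).apply_single_nonneg x y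
  calc (P ^ n) (Pi.single y 1) x ≤ (A' + A) / 2 * ρ / c := by
        rw [le_div_iff₀' hc]
        exact (mul_le_mul_of_nonneg_right (h.le_weight x) hp0).trans hweighted
    _ ≤ (A' + A) / 2 * ρ / c * (μ y / c) :=
        le_mul_of_one_le_right (by positivity) ((one_le_div hc).2 (h.le_weight y))
    _ = _ := by rw [hρ]; ring

end UniformWalk

section StepOperator

variable {G ι : Type*} [AddCommGroup G] [Fintype ι] {μ : G → ℝ} {a : ι → G → ℝ} {s : ι → G}

/-- The transition operator `f ↦ μ⁻¹ ∑ⱼ aⱼ f(· + sⱼ)` of the random walk on `G` which at `x` makes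
the jump `s j` with probability `a j x / μ x`. -/
def stepOp (μ : G → ℝ) (a : ι → G → ℝ) (s : ι → G) : Module.End ℝ (G → ℝ) where
  toFun f x := (μ x)⁻¹ * ∑ j, a j x * f (x + s j)
  map_add' f g := by
    ext x
    simp only [Pi.add_apply, mul_add, Finset.sum_add_distrib]
  map_smul' t f := by
    ext x
    simp only [Pi.smul_apply, smul_eq_mul, RingHom.id_apply, Finset.mul_sum, mul_left_comm t]

lemma stepOp_apply (μ : G → ℝ) (a : ι → G → ℝ) (s : ι → G) (f : G → ℝ) (x : G) :
    stepOp μ a s f x = (μ x)⁻¹ * ∑ j, a j x * f (x + s j) := rfl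

lemma isMarkovOperator_stepOp (hμ : ∀ x, 0 < μ x) (ha : ∀ j x, 0 ≤ a j x)
    (hrow : ∀ x, ∑ j, a j x = μ x) : IsMarkovOperator (stepOp μ a s) where
  map_nonneg hf x := mul_nonneg (inv_nonneg.2 (hμ x).le)
    (Finset.sum_nonneg fun j _ => mul_nonneg (ha j x) (hf _))
  map_one := by
    ext x
    simp [stepOp_apply, hrow, (hμ x).ne']
  hasFiniteSupport hf := Function.HasFiniteSupport.fun_mul_right _ <|
    Function.HasFiniteSupport.sum
      (fun j => (hasFiniteSupport_comp_add hf (s j)).fun_mul_right (a j)) _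

lemma div_le_stepOp_single_apply [DecidableEq G] (ha : ∀ j x, 0 ≤ a j x) (j : ι) {x : G}
    (hμ : 0 < μ x) : a j x / μ x ≤ stepOp μ a s (Pi.single (x + s j) 1) x := by
  rw [stepOp_apply, div_eq_inv_mul]
  gcongr
  have hsingle : 0 ≤ (Pi.single (x + s j) 1 : G → ℝ) := Pi.single_nonneg.2 zero_le_one
  have hterm : ∀ k, 0 ≤ a k x * (Pi.single (x + s j) 1 : G → ℝ) (x + s k) := fun k =>
    mul_nonneg (ha k x) (hsingle _)
  simpa using Finset.single_le_sum (fun k _ => hterm k) (Finset.mem_univ j)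

lemma areAdjoint_stepOp (hμ : ∀ x, μ x ≠ 0) :
    AreAdjoint μ (stepOp μ a s) (stepOp μ (fun j x => a j (x - s j)) fun j => -s j) := by
  intro f g hfg
  have hleft : ∀ x, μ x * (f x * stepOp μ a s g x) = ∑ j, a j x * (f x * g (x + s j)) := fun x => by
    rw [stepOp_apply, mul_left_comm (f x), mul_inv_cancel_left₀ (hμ x), Finset.mul_sum]
    simp only [mul_left_comm (f x)]
  have hright : ∀ x, μ x * (stepOp μ (fun j x => a j (x - s j)) (fun j => -s j) f x * g x)
      = ∑ j, a j (x - s j) * (f (x - s j) * g (x - s j + s j)) := fun x => by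
    rw [stepOp_apply, mul_assoc, mul_inv_cancel_left₀ (hμ x), Finset.sum_mul]
    simp only [← sub_eq_add_neg, sub_add_cancel, mul_assoc]
  have hfin : ∀ j, (fun x => a j x * (f x * g (x + s j))).HasFiniteSupport := fun j =>
    Function.HasFiniteSupport.fun_mul_right _ <| hfg.elim (fun hf => hf.fun_mul_left _)
      fun hg => (hasFiniteSupport_comp_add hg (s j)).fun_mul_right f
  have hfin' : ∀ j, (fun x => a j (x - s j) * (f (x - s j) * g (x - s j + s j))).HasFiniteSupport :=
    fun j => (hfin j).fun_comp_of_injective (sub_left_injective (b := s j))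
  simp only [hleft, hright]
  rw [Summable.tsum_finsetSum fun j _ => summable_of_hasFiniteSupport (hfin j),
    Summable.tsum_finsetSum fun j _ => summable_of_hasFiniteSupport (hfin' j)]
  exact Finset.sum_congr rfl fun j _ =>
    ((Equiv.subRight (s j)).tsum_eq fun x => a j x * (f x * g (x + s j))).symm

end StepOperator

section Cycles

variable {d K : ℕ} {Ω : Type*} {n : Fin K → ℕ} {z : Fin K → ℕ → Zd d} {T : Zd d → Ω → Ω}
  {W : Fin K → Ω → ℝ} {c C : ℝ}

lemma tsum_ite_exists_eq {N : ℕ} {z : ℕ → Zd d}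
    (hinj : ∀ j k, j < N → k < N → z j = z k → j = k) (R : ℕ → Prop) [DecidablePred R]
    (φ : Zd d → ℝ) :
    (∑' w, if ∃ j < N, z j + w = 0 ∧ R j then φ w else 0)
      = ∑ j : Fin N, if R j then φ (-z j) else 0 := by
  have hinj' : Function.Injective fun j : Fin N => -z j := fun j k hjk =>
    Fin.ext (hinj j k j.2 k.2 (neg_injective hjk))
  rw [← hinj'.tsum_eq, tsum_fintype]
  · refine Finset.sum_congr rfl fun j _ => if_congr ⟨?_, fun hR => ⟨j, j.2, by simp, hR⟩⟩ rfl rfl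
    rintro ⟨k, hk, hkj, hR⟩
    rwa [← hinj k j hk j.2 (add_neg_eq_zero.1 hkj)]
  · intro w hw
    obtain ⟨j, hj, hjw, -⟩ : ∃ j < N, z j + w = 0 ∧ R j := by
      by_contra hne
      exact hw (if_neg hne)
    exact ⟨⟨j, hj⟩, neg_eq_of_add_eq_zero_right hjw⟩

/-- The edges of the cycles: `⟨i, j⟩` stands for the `j`-th edge `(z i j, z i (j + 1))` of the
`i`-th cycle. -/
abbrev CycleEdge {K : ℕ} (n : Fin K → ℕ) := Σ i : Fin K, Fin (n i)

/-- The weight `W_i(T_v ω)` of the translate `C_i + v` in which the edge `p` of `C_i` starts at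
`x`. -/
def edgeWeight (n : Fin K → ℕ) (z : Fin K → ℕ → Zd d) (T : Zd d → Ω → Ω) (W : Fin K → Ω → ℝ)
    (ω : Ω) (p : CycleEdge n) (x : Zd d) : ℝ :=
  W p.1 (T (x - z p.1 p.2) ω)

/-- The jump along an edge of a cycle. -/
def edgeStep (n : Fin K → ℕ) (z : Fin K → ℕ → Zd d) (p : CycleEdge n) : Zd d :=
  z p.1 (p.2 + 1) - z p.1 p.2

/-- The transition operator of the random walk with kernel `Qker n z T W ω`. -/
def quenchedOp (n : Fin K → ℕ) (z : Fin K → ℕ → Zd d) (T : Zd d → Ω → Ω) (W : Fin K → Ω → ℝ)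
    (ω : Ω) : Module.End ℝ (Zd d → ℝ) :=
  stepOp (fun x => Mfun n z T W (T x ω)) (edgeWeight n z T W ω) (edgeStep n z)

/-- The adjoint of `quenchedOp n z T W ω`: the walk that runs through the cycles backwards. -/
def quenchedAdjoint (n : Fin K → ℕ) (z : Fin K → ℕ → Zd d) (T : Zd d → Ω → Ω)
    (W : Fin K → Ω → ℝ) (ω : Ω) : Module.End ℝ (Zd d → ℝ) :=
  stepOp (fun x => Mfun n z T W (T x ω))
    (fun p x => edgeWeight n z T W ω p (x - edgeStep n z p)) fun p => -edgeStep n z p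

lemma Mfun_eq_sum_edgeWeight (hinj : ∀ i, ∀ j k, j < n i → k < n i → z i j = z i k → j = k)
    (hT : ∀ x y : Zd d, T (x + y) = T x ∘ T y) (ω : Ω) (x : Zd d) :
    Mfun n z T W (T x ω) = ∑ p, edgeWeight n z T W ω p x := by
  rw [Mfun, Fintype.sum_sigma]
  refine Finset.sum_congr rfl fun i _ => ?_
  have hcycle := tsum_ite_exists_eq (hinj i) (fun _ => True) fun w => W i (T w (T x ω))
  simp only [and_true, if_true] at hcycle
  rw [hcycle]
  simp only [edgeWeight, ← Function.comp_apply (f := T _), ← hT, neg_add_eq_sub]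

lemma Qker_eq_quenchedOp_single_apply
    (hinj : ∀ i, ∀ j k, j < n i → k < n i → z i j = z i k → j = k)
    (hT : ∀ x y : Zd d, T (x + y) = T x ∘ T y) (ω : Ω) (x y : Zd d) :
    Qker n z T W ω x y = quenchedOp n z T W ω (Pi.single y 1) x := by
  rw [Qker, pfun, quenchedOp, stepOp_apply, Fintype.sum_sigma]
  congr 1
  refine Finset.sum_congr rfl fun i _ => ?_
  have hjump : ∀ j w, z i j + w = 0 → (z i (j + 1) + w = y - x ↔ x + (z i (j + 1) - z i j) = y) :=
    fun j w hw => by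
      rw [← neg_eq_of_add_eq_zero_right hw, ← sub_eq_add_neg, eq_sub_iff_add_eq, add_comm]
  have hedge : ∀ w, (∃ j, 1 ≤ j ∧ j ≤ n i ∧ z i (j - 1) + w = 0 ∧ z i j + w = y - x)
      ↔ ∃ j < n i, z i j + w = 0 ∧ x + (z i (j + 1) - z i j) = y := fun w => by
    constructor
    · rintro ⟨_ | j, hj, hjn, hstart, hend⟩
      · contradiction
      · exact ⟨j, hjn, hstart, (hjump j w hstart).1 hend⟩
    · rintro ⟨j, hjn, hstart, hend⟩
      exact ⟨j + 1, Nat.le_add_left 1 j, hjn, hstart, (hjump j w hstart).2 hend⟩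
  simp only [hedge]
  rw [tsum_ite_exists_eq (hinj i) (fun j => x + (z i (j + 1) - z i j) = y)]
  refine Finset.sum_congr rfl fun j _ => ?_
  rw [edgeWeight, ← Function.comp_apply (f := T _), ← hT, neg_add_eq_sub, edgeStep,
    Pi.single_apply, mul_ite, mul_one, mul_zero]

lemma sum_edgeWeight_sub_edgeStep (hcyc : ∀ i, z i (n i) = z i 0) (ω : Ω) (x : Zd d) :
    ∑ p, edgeWeight n z T W ω p (x - edgeStep n z p) = ∑ p, edgeWeight n z T W ω p x := by
  rw [Fintype.sum_sigma, Fintype.sum_sigma]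
  refine Finset.sum_congr rfl fun i _ => ?_
  have hend : ∀ j : ℕ, x - (z i (j + 1) - z i j) - z i j = x - z i (j + 1) := fun j => by abel
  simp only [edgeWeight, edgeStep, hend]
  rw [Fin.sum_univ_eq_sum_range (fun j => W i (T (x - z i (j + 1)) ω)),
    Fin.sum_univ_eq_sum_range (fun j => W i (T (x - z i j) ω))]
  have hlast := Finset.sum_range_succ (fun j => W i (T (x - z i j) ω)) (n i)
  have hfirst := Finset.sum_range_succ' (fun j => W i (T (x - z i j) ω)) (n i)
  rw [hcyc i] at hlast
  linarith

lemma isMarkovOperator_quenchedOp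
    (hinj : ∀ i, ∀ j k, j < n i → k < n i → z i j = z i k → j = k)
    (hT : ∀ x y : Zd d, T (x + y) = T x ∘ T y) (hW : ∀ i ω, 0 ≤ W i ω)
    (hM : ∀ ω, 0 < Mfun n z T W ω) (ω : Ω) : IsMarkovOperator (quenchedOp n z T W ω) :=
  isMarkovOperator_stepOp (fun _ => hM _) (fun _ _ => hW _ _)
    fun x => (Mfun_eq_sum_edgeWeight hinj hT ω x).symm

lemma isMarkovOperator_quenchedAdjoint (hcyc : ∀ i, z i (n i) = z i 0)
    (hinj : ∀ i, ∀ j k, j < n i → k < n i → z i j = z i k → j = k)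
    (hT : ∀ x y : Zd d, T (x + y) = T x ∘ T y) (hW : ∀ i ω, 0 ≤ W i ω)
    (hM : ∀ ω, 0 < Mfun n z T W ω) (ω : Ω) : IsMarkovOperator (quenchedAdjoint n z T W ω) :=
  isMarkovOperator_stepOp (fun _ => hM _) (fun _ _ => hW _ _) fun x => by
    rw [sum_edgeWeight_sub_edgeStep hcyc, ← Mfun_eq_sum_edgeWeight hinj hT]

lemma areAdjoint_quenchedOp (hM : ∀ ω, 0 < Mfun n z T W ω) (ω : Ω) :
    AreAdjoint (fun x => Mfun n z T W (T x ω)) (quenchedOp n z T W ω) (quenchedAdjoint n z T W ω) :=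
  areAdjoint_stepOp fun _ => (hM _).ne'

lemma exists_div_card_le_edgeWeight [Nonempty (CycleEdge n)]
    (hinj : ∀ i, ∀ j k, j < n i → k < n i → z i j = z i k → j = k)
    (hT : ∀ x y : Zd d, T (x + y) = T x ∘ T y) (ω : Ω) (x : Zd d) :
    ∃ p, Mfun n z T W (T x ω) / Fintype.card (CycleEdge n) ≤ edgeWeight n z T W ω p x := by
  obtain ⟨p, -, hp⟩ := Finset.exists_le_of_sum_le
    (f := fun _ : CycleEdge n => Mfun n z T W (T x ω) / Fintype.card (CycleEdge n))
    (g := fun p => edgeWeight n z T W ω p x) Finset.univ_nonempty (by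
      rw [← Mfun_eq_sum_edgeWeight hinj hT, Finset.sum_const, Finset.card_univ, nsmul_eq_mul,
        mul_div_cancel₀ _ (by exact_mod_cast Fintype.card_ne_zero)])
  exact ⟨p, hp⟩

lemma apply_succ_mod_of_apply_eq_apply_zero {α : Type*} {u : ℕ → α} {N : ℕ} (hN : 0 < N)
    (hu : u N = u 0) (k : ℕ) : u ((k + 1) % N) = u (k % N + 1) := by
  rcases (Nat.succ_le_of_lt (Nat.mod_lt k hN)).lt_or_eq with hlt | heq
  · rw [← Nat.mod_add_mod, Nat.mod_eq_of_lt hlt]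
  · rw [← Nat.mod_add_mod, ← Nat.succ_eq_add_one (k % N), heq, Nat.mod_self, hu]

lemma div_le_quenchedOp_single_apply_of_edge (hW : ∀ i ω, 0 ≤ W i ω)
    (hM : ∀ ω, 0 < Mfun n z T W ω) (hMC : ∀ ω, Mfun n z T W ω ≤ C) (ω : Ω) (i : Fin K) {k : ℕ}
    (hk : k < n i) (v : Zd d) :
    W i (T v ω) / C ≤ quenchedOp n z T W ω (Pi.single (z i (k + 1) + v) 1) (z i k + v) := by
  have hstep := div_le_stepOp_single_apply (μ := fun x => Mfun n z T W (T x ω))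
    (a := edgeWeight n z T W ω) (s := edgeStep n z) (fun _ _ => hW _ _) ⟨i, ⟨k, hk⟩⟩
    (x := z i k + v) (hM _)
  have hend : z i k + v + (z i (k + 1) - z i k) = z i (k + 1) + v := by abel
  simp only [edgeWeight, edgeStep, add_sub_cancel_left, hend] at hstep
  exact (div_le_div_of_nonneg_left (hW _ _) (hM _) (hMC _)).trans hstep

lemma pow_le_quenchedOp_pow_single_apply_of_dvd (hcyc : ∀ i, z i (n i) = z i 0) {ω : Ω}
    (hP : IsMarkovOperator (quenchedOp n z T W ω)) (hW : ∀ i ω, 0 ≤ W i ω)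
    (hM : ∀ ω, 0 < Mfun n z T W ω) (hMC : ∀ ω, Mfun n z T W ω ≤ C) {i : Fin K} {j L : ℕ}
    (hj : j < n i) (hL : n i ∣ L) (v : Zd d) :
    (W i (T v ω) / C) ^ L
      ≤ (quenchedOp n z T W ω ^ L) (Pi.single (z i j + v) 1) (z i j + v) := by
  have hC : 0 ≤ C := (hM ω).le.trans (hMC ω)
  have hedge : ∀ k, W i (T v ω) / C ≤ quenchedOp n z T W ω
      (Pi.single (z i ((k + 1) % n i) + v) 1) (z i (k % n i) + v) := fun k => by
    have hn : 0 < n i := j.zero_le.trans_lt hj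
    rw [apply_succ_mod_of_apply_eq_apply_zero hn (hcyc i)]
    exact div_le_quenchedOp_single_apply_of_edge hW hM hMC ω i (Nat.mod_lt k hn) v
  obtain ⟨q, rfl⟩ := hL
  simpa only [Nat.add_mul_mod_self_left, Nat.mod_eq_of_lt hj] using
    hP.pow_le_pow_apply_single_of_path (div_nonneg (hW _ _) hC)
      (γ := fun k => z i (k % n i) + v) hedge (n i * q) j

/-- Some cycle through `x` carries at least the average of the weights of the edges leaving `x`,
and going around it returns to `x`. -/
lemma pow_prod_le_quenchedOp_pow_prod_single_apply [Nonempty (CycleEdge n)]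
    (hcyc : ∀ i, z i (n i) = z i 0)
    (hinj : ∀ i, ∀ j k, j < n i → k < n i → z i j = z i k → j = k)
    (hT : ∀ x y : Zd d, T (x + y) = T x ∘ T y) (hW : ∀ i ω, 0 ≤ W i ω) (hc : 0 < c)
    (hM : ∀ ω, c ≤ Mfun n z T W ω ∧ Mfun n z T W ω ≤ C) (ω : Ω) (x : Zd d) :
    (c / Fintype.card (CycleEdge n) / C) ^ ∏ i, n i
      ≤ (quenchedOp n z T W ω ^ ∏ i, n i) (Pi.single x 1) x := by
  have hM0 : ∀ ω, 0 < Mfun n z T W ω := fun ω => hc.trans_le (hM ω).1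
  have hC : 0 ≤ C := (hM0 ω).le.trans (hM ω).2
  obtain ⟨⟨i, j⟩, hp⟩ := exists_div_card_le_edgeWeight (W := W) hinj hT ω x
  have hreturn := pow_le_quenchedOp_pow_single_apply_of_dvd hcyc
    (isMarkovOperator_quenchedOp hinj hT hW hM0 ω) hW hM0 (fun ω => (hM ω).2) j.2
    (Finset.dvd_prod_of_mem n (Finset.mem_univ i)) (x - z i j)
  rw [add_sub_cancel] at hreturn
  refine le_trans ?_ hreturn
  gcongr
  exact (div_le_div_of_nonneg_right (hM _).1 (Nat.cast_nonneg _)).trans hp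

theorem quenched_ondiagonal_upper_bound_general
    (d K : ℕ) (Ω : Type*) (n : Fin K → ℕ) (z : Fin K → ℕ → Zd d) (T : Zd d → Ω → Ω)
    (W : Fin K → Ω → ℝ) (c C : ℝ) (hlen : ∀ i, 0 < n i) (hcyc : ∀ i, z i (n i) = z i 0)
    (hinj : ∀ i, ∀ j k, j < n i → k < n i → z i j = z i k → j = k)
    (hT : ∀ x y : Zd d, T (x + y) = T x ∘ T y) (hW : ∀ i ω, 0 ≤ W i ω) (hc : 0 < c)
    (hM : ∀ ω, c ≤ Mfun n z T W ω ∧ Mfun n z T W ω ≤ C) (ε : ℝ) (N : ℕ) (hε : 0 < ε)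
    (hirr : ∀ (x : Zd d) (ω : Ω) (i : Fin d),
      ∃ m ≤ N, ε ≤ kerpow (Qker n z T W ω) m x (x + Pi.single i 1)) :
    ∃ C₁ : ℝ, 0 < C₁ ∧ ∀ (ω : Ω) (m : ℕ), 1 ≤ m → ∀ x y : Zd d,
      kerpow (Qker n z T W ω) m x y
        ≤ C₁ * Mfun n z T W (T y ω) * (m : ℝ) ^ (-(d : ℝ) / 2) := by
  rcases isEmpty_or_nonempty Ω with hΩ | ⟨⟨ω₀⟩⟩
  · exact ⟨1, one_pos, fun ω => hΩ.elim ω⟩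
  have hM0 : ∀ ω, 0 < Mfun n z T W ω := fun ω => hc.trans_le (hM ω).1
  have hC : 0 < C := (hM0 ω₀).trans_le (hM ω₀).2
  have hne : Nonempty (CycleEdge n) := Finset.univ_nonempty_iff.1 <|
    Finset.nonempty_of_sum_ne_zero (Mfun_eq_sum_edgeWeight hinj hT ω₀ 0 ▸ (hM0 _).ne')
  set δ : ℝ := (c / Fintype.card (CycleEdge n) / C) ^ ∏ i, n i
  have hδ : 0 < δ := by positivity
  obtain ⟨A, hA, hbound⟩ := exists_pow_apply_single_le d N
    (Finset.prod_pos fun i _ => hlen i) hc hC (lt_min hε hδ)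
  have hP := isMarkovOperator_quenchedOp hinj hT hW hM0
  have hP' := isMarkovOperator_quenchedAdjoint hcyc hinj hT hW hM0
  have hadj := areAdjoint_quenchedOp hM0
  have hker : ∀ ω k x y, kerpow (Qker n z T W ω) k x y = _ := fun ω =>
    kerpow_eq_pow_apply (hP ω) (Qker_eq_quenchedOp_single_apply hinj hT ω)
  simp only [hker, neg_div] at hirr ⊢
  refine ⟨A, hA, fun ω => hbound _ _ _ ⟨hP ω, (hadj ω).isInvariantWeight (hP' ω),
    fun _ => (hM _).1, fun _ => (hM _).2, fun x => (min_le_right _ _).trans <|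
      pow_prod_le_quenchedOp_pow_prod_single_apply hcyc hinj hT hW hc hM ω x,
    fun i => Or.inl fun x => ?_⟩ (hP' ω) (hadj ω)⟩
  obtain ⟨k, hk, hmove⟩ := hirr x ω i
  exact ⟨k, hk, (min_le_left _ _).trans hmove⟩

end Cycles

lemma eucNorm_single {d : ℕ} (i : Fin d) : eucNorm (Pi.single i 1 : Zd d) = 1 := by
  rw [eucNorm, Finset.sum_eq_single i (fun k _ hk => by simp [hk]) (by simp)]
  simp

theorem quenched_ondiagonal_upper_bound
    (d K : ℕ) (hd : 0 < d) (hK : 0 < K) (Ω : Type*)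
    (n : Fin K → ℕ) (z : Fin K → ℕ → Zd d)
    (T : Zd d → Ω → Ω) (W : Fin K → Ω → ℝ) (c C : ℝ)
    (hlen : ∀ i, 0 < n i)
    (hcyc : ∀ i, z i (n i) = z i 0)
    (hinj : ∀ i, ∀ j k, j < n i → k < n i → z i j = z i k → j = k)
    (hT : ∀ x y : Zd d, T (x + y) = T x ∘ T y) (hT0 : T 0 = id)
    (hW : ∀ i ω, 0 ≤ W i ω)
    (hc : 0 < c) (hCfin : c ≤ C)
    (hM : ∀ ω, c ≤ Mfun n z T W ω ∧ Mfun n z T W ω ≤ C)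
    (ε : ℝ) (N : ℕ) (hε : 0 < ε)
    (hirr : ∀ (x : Zd d) (ω : Ω) (e : Zd d), eucNorm e = 1 →
      ∃ m ≤ N, ε ≤ kerpow (Qker n z T W ω) m x (x + e)) :
    ∃ C₁ : ℝ, 0 < C₁ ∧ ∀ (ω : Ω) (m : ℕ), 1 ≤ m → ∀ x y : Zd d,
      kerpow (Qker n z T W ω) m x y
        ≤ C₁ * Mfun n z T W (T y ω) * (m : ℝ) ^ (-(d : ℝ) / 2) :=
  quenched_ondiagonal_upper_bound_general d K Ω n z T W c C hlen hcyc hinj hT hW hc hM ε N hε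
    fun x ω i => hirr x ω _ (eucNorm_single i)

end
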